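/- Let M be the double star matrix built from a, b, x = [x_i], y = [y_i], z = [z_i], w = [w_i] over a field 𝔽 with involution, and assume the four elements s = Σ_i x_i·conj(x_i), u = Σ_i y_i·conj(y_i), t = Σ_i z_i·conj(z_i), v = Σ_i w_i·conj(w_i) are all nonzero. Then the Moore–Penrose inverse of M is N = [[0, u^{-1} y*, 0, 0], [s^{-1} x̄, 0, 0, −s^{-1} a v^{-1} x̄ w*], [0, 0, 0, v^{-1} w*], [0, −t^{-1} b u^{-1} z̄ y*, t^{-1} z̄, 0]] (with diagonal blocks of sizes 1, m, 1, n, where x̄ denotes entrywise conjugation and y* the conjugate transpose); that is, N satisfies MNM = M, NMN = N, (MN)* = MN, and (NM)* = NM. -/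

import Mathlib

open Matrix

/-- The double star matrix of order `m + n + 2`, in block form (blocks of sizes 1, m, 1, n):
`M = [[0, xᵀ, a, 0], [y, 0, 0, 0], [b, 0, 0, zᵀ], [0, 0, w, 0]]`. -/
def doubleStar {F : Type*} [Field F] {m n : ℕ} (a b : F)
    (x y : Fin m → F) (z w : Fin n → F) :
    Matrix (Fin 1 ⊕ Fin m ⊕ Fin 1 ⊕ Fin n) (Fin 1 ⊕ Fin m ⊕ Fin 1 ⊕ Fin n) F :=
  Matrix.of fun i j =>
    match i, j with
    | Sum.inl _, Sum.inr (Sum.inl j) => x j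
    | Sum.inl _, Sum.inr (Sum.inr (Sum.inl _)) => a
    | Sum.inr (Sum.inl i), Sum.inl _ => y i
    | Sum.inr (Sum.inr (Sum.inl _)), Sum.inl _ => b
    | Sum.inr (Sum.inr (Sum.inl _)), Sum.inr (Sum.inr (Sum.inr j)) => z j
    | Sum.inr (Sum.inr (Sum.inr i)), Sum.inr (Sum.inr (Sum.inl _)) => w i
    | _, _ => 0

/-- The matrix `[[0, u⁻¹ y*, 0, 0], [s⁻¹ x̄, 0, 0, -s⁻¹ a v⁻¹ x̄ w*], [0, 0, 0, v⁻¹ w*],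
[0, -t⁻¹ b u⁻¹ z̄ y*, t⁻¹ z̄, 0]]` (blocks of sizes 1, m, 1, n). -/
def doubleStarMP {F : Type*} [Field F] [StarRing F] {m n : ℕ} (a b s u t v : F)
    (x y : Fin m → F) (z w : Fin n → F) :
    Matrix (Fin 1 ⊕ Fin m ⊕ Fin 1 ⊕ Fin n) (Fin 1 ⊕ Fin m ⊕ Fin 1 ⊕ Fin n) F :=
  Matrix.of fun i j =>
    match i, j with
    | Sum.inl _, Sum.inr (Sum.inl j) => u⁻¹ * star (y j)
    | Sum.inr (Sum.inl i), Sum.inl _ => s⁻¹ * star (x i)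
    | Sum.inr (Sum.inl i), Sum.inr (Sum.inr (Sum.inr j)) =>
        -(s⁻¹ * a * v⁻¹ * star (x i) * star (w j))
    | Sum.inr (Sum.inr (Sum.inl _)), Sum.inr (Sum.inr (Sum.inr j)) => v⁻¹ * star (w j)
    | Sum.inr (Sum.inr (Sum.inr i)), Sum.inr (Sum.inl j) =>
        -(t⁻¹ * b * u⁻¹ * star (z i) * star (y j))
    | Sum.inr (Sum.inr (Sum.inr i)), Sum.inr (Sum.inr (Sum.inl _)) => t⁻¹ * star (z i)
    | _, _ => 0

/-!
A double star is the path `leaf – hub – hub – leaf` on four vertices with its two leaves blown up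
to `m` and `n` leaves. So the double star matrix factors as `M = L * K * Pᴴ`, where `K` is the
`4 × 4` weighted adjacency matrix of the path, which is invertible, while `L` and `P` have four
columns each, with Gram matrices `Lᴴ * L = diag (1, u, 1, v)` and `Pᴴ * P = diag (1, s, 1, t)`.
When these are invertible this is a full-rank factorization, and MacDuffee's formula
`M† = P * (Pᴴ * P)⁻¹ * K⁻¹ * (Lᴴ * L)⁻¹ * Lᴴ` gives the stated blocks.
-/

/-- `X` is the Moore–Penrose inverse of `A`, in the form of the four Penrose equations. -/
structure IsMoorePenroseInverse {m n R : Type*} [Fintype m] [Fintype n]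
    [NonUnitalNonAssocSemiring R] [Star R] (A : Matrix m n R) (X : Matrix n m R) : Prop where
  mul_mul_left : A * X * A = A
  mul_mul_right : X * A * X = X
  isHermitian_left : (A * X).IsHermitian
  isHermitian_right : (X * A).IsHermitian

section FullRankFactorization

variable {m n k l R : Type*} [Fintype m] [Fintype n] [Fintype k] [Fintype l]
  [DecidableEq k] [DecidableEq l] [Semiring R] [StarRing R]

lemma isHermitian_of_mul_eq_one {B G : Matrix k k R} (hB : B.IsHermitian) (hG : G * B = 1) :
    G.IsHermitian := by
  have hG' : B * Gᴴ = 1 := by simpa [hB.eq] using congrArg conjTranspose hG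
  exact (left_inv_eq_right_inv hG hG').symm

theorem isMoorePenroseInverse_mul_mul_conjTranspose
    {L : Matrix m k R} {P : Matrix n l R} {K : Matrix k l R} {K' : Matrix l k R}
    {G : Matrix k k R} {H : Matrix l l R}
    (hG : G * (Lᴴ * L) = 1) (hH : H * (Pᴴ * P) = 1) (hK : K * K' = 1) (hK' : K' * K = 1) :
    IsMoorePenroseInverse (L * K * Pᴴ) (P * (H * K' * G) * Lᴴ) := by
  have hG_herm := isHermitian_of_mul_eq_one (isHermitian_conjTranspose_mul_self L) hG
  have hH_herm := isHermitian_of_mul_eq_one (isHermitian_conjTranspose_mul_self P) hH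
  have hH' : Pᴴ * P * H = 1 := by simpa [hH_herm.eq] using congrArg conjTranspose hH
  have hMN : L * K * Pᴴ * (P * (H * K' * G) * Lᴴ) = L * G * Lᴴ := calc
    _ = L * (K * (Pᴴ * P * H) * K') * G * Lᴴ := by simp only [Matrix.mul_assoc]
    _ = L * G * Lᴴ := by rw [hH', Matrix.mul_one, hK, Matrix.mul_one]
  have hNM : P * (H * K' * G) * Lᴴ * (L * K * Pᴴ) = P * H * Pᴴ := calc
    _ = P * H * (K' * (G * (Lᴴ * L)) * K) * Pᴴ := by simp only [Matrix.mul_assoc]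
    _ = P * H * Pᴴ := by rw [hG, Matrix.mul_one, hK', Matrix.mul_one]
  refine ⟨?_, ?_, ?_, ?_⟩
  · calc
      _ = L * (G * (Lᴴ * L)) * K * Pᴴ := by rw [hMN]; simp only [Matrix.mul_assoc]
      _ = L * K * Pᴴ := by rw [hG, Matrix.mul_one]
  · calc
      _ = P * (H * (Pᴴ * P)) * (H * K' * G) * Lᴴ := by rw [hNM]; simp only [Matrix.mul_assoc]
      _ = P * (H * K' * G) * Lᴴ := by rw [hH, Matrix.mul_one]
  · rw [hMN]
    exact isHermitian_mul_mul_conjTranspose L hG_herm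
  · rw [hNM]
    exact isHermitian_mul_mul_conjTranspose P hH_herm

end FullRankFactorization

section Blowup

variable {ι κ k l R : Type*}

/-- The matrix whose row `i` has the single entry `c i`, in column `π i`. The product
`blowup π c * K * (blowup ρ d)ᴴ` is the blow-up of `K` that repeats its rows along `π` and its
columns along `ρ`, with weights `c` and `star d`. -/
def blowup [DecidableEq k] [Zero R] (π : ι → k) (c : ι → R) : Matrix ι k R :=
  Matrix.of fun i => Pi.single (π i) (c i)

/-- The squared norm of the restriction of `c` to the fiber of `π` over `j`. -/
def fiberNormSq [Fintype ι] [DecidableEq k] [NonUnitalNonAssocSemiring R] [Star R]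
    (π : ι → k) (c : ι → R) (j : k) : R :=
  ∑ i with π i = j, star (c i) * c i

lemma blowup_mul_mul_conjTranspose_apply [Fintype k] [DecidableEq k] [Fintype l] [DecidableEq l]
    [NonUnitalSemiring R] [StarRing R] (π : ι → k) (c : ι → R) (ρ : κ → l) (d : κ → R)
    (K : Matrix k l R) (i : ι) (j : κ) :
    (blowup π c * K * (blowup ρ d)ᴴ) i j = c i * K (π i) (ρ j) * star (d j) := by
  simp [blowup, Matrix.mul_apply, Pi.single_apply, apply_ite star]

lemma conjTranspose_blowup_mul_self [Fintype ι] [DecidableEq k]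
    [NonUnitalSemiring R] [StarRing R] (π : ι → k) (c : ι → R) :
    (blowup π c)ᴴ * blowup π c = diagonal (fiberNormSq π c) := by
  ext p q
  rw [Matrix.mul_apply]
  obtain rfl | hpq := eq_or_ne p q
  · rw [diagonal_apply_eq, fiberNormSq, Finset.sum_filter]
    refine Finset.sum_congr rfl fun i _ => ?_
    obtain rfl | hp := eq_or_ne (π i) p
    · simp [blowup]
    · simp [blowup, hp, hp.symm]
  · rw [diagonal_apply_ne _ hpq]
    refine Finset.sum_eq_zero fun i _ => ?_
    obtain rfl | hp := eq_or_ne p (π i)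
    · simp [blowup, hpq.symm]
    · simp [blowup, hp]

variable [Fintype ι] [Fintype κ] [Fintype k] [DecidableEq k] [Fintype l] [DecidableEq l]
  [DivisionRing R] [StarRing R]

lemma diagonal_inv_mul_conjTranspose_blowup_mul_self {π : ι → k} {c : ι → R}
    (hc : ∀ p, fiberNormSq π c p ≠ 0) :
    diagonal (fiberNormSq π c)⁻¹ * ((blowup π c)ᴴ * blowup π c) = 1 := by
  simp [conjTranspose_blowup_mul_self, hc]

theorem isMoorePenroseInverse_blowup {π : ι → k} {c : ι → R} {ρ : κ → l} {d : κ → R}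
    {K : Matrix k l R} {K' : Matrix l k R} (hc : ∀ p, fiberNormSq π c p ≠ 0)
    (hd : ∀ q, fiberNormSq ρ d q ≠ 0) (hK : K * K' = 1) (hK' : K' * K = 1) :
    IsMoorePenroseInverse (blowup π c * K * (blowup ρ d)ᴴ)
      (blowup ρ d * (diagonal (fiberNormSq ρ d)⁻¹ * K' * diagonal (fiberNormSq π c)⁻¹) *
        (blowup π c)ᴴ) :=
  isMoorePenroseInverse_mul_mul_conjTranspose
    (diagonal_inv_mul_conjTranspose_blowup_mul_self hc)
    (diagonal_inv_mul_conjTranspose_blowup_mul_self hd) hK hK'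

end Blowup

section WeightedPath

variable {R : Type*} [Ring R]

/-- The weighted adjacency matrix of the path `leaf – hub – hub – leaf`, with vertices in the order
of the blocks of `doubleStar`: first hub, its leaf, second hub, its leaf. -/
def weightedPath (a b : R) : Matrix (Fin 4) (Fin 4) R :=
  !![0, 1, a, 0;
     1, 0, 0, 0;
     b, 0, 0, 1;
     0, 0, 1, 0]

/-- The inverse of `weightedPath a b`. -/
def weightedPathInv (a b : R) : Matrix (Fin 4) (Fin 4) R :=
  !![0, 1, 0, 0;
     1, 0, 0, -a;
     0, 0, 0, 1;
     0, -b, 1, 0]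

lemma weightedPath_mul_weightedPathInv (a b : R) :
    weightedPath a b * weightedPathInv a b = 1 := by
  ext i j
  fin_cases i <;> fin_cases j <;>
    simp [weightedPath, weightedPathInv, Matrix.mul_apply, Fin.sum_univ_four]

lemma weightedPathInv_mul_weightedPath (a b : R) :
    weightedPathInv a b * weightedPath a b = 1 := by
  ext i j
  fin_cases i <;> fin_cases j <;>
    simp [weightedPath, weightedPathInv, Matrix.mul_apply, Fin.sum_univ_four]

lemma diagonal_inv_mul_weightedPathInv_mul_diagonal_inv {D : Type*} [DivisionRing D]
    (a b s u t v : D) :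
    diagonal ![1, s, 1, t]⁻¹ * weightedPathInv a b * diagonal ![1, u, 1, v]⁻¹ =
      !![0, u⁻¹, 0, 0;
         s⁻¹, 0, 0, -(s⁻¹ * a * v⁻¹);
         0, 0, 0, v⁻¹;
         0, -(t⁻¹ * b * u⁻¹), t⁻¹, 0] := by
  ext i j
  rw [mul_diagonal, diagonal_mul]
  fin_cases i <;> fin_cases j <;> simp [weightedPathInv]

end WeightedPath

section DoubleStar

/-- The map from the double star to the path of `weightedPath` that merges the leaves of each
hub. -/
def mergeLeaves {p q : Type*} : Fin 1 ⊕ p ⊕ Fin 1 ⊕ q → Fin 4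
  | Sum.inl _ => 0
  | Sum.inr (Sum.inl _) => 1
  | Sum.inr (Sum.inr (Sum.inl _)) => 2
  | Sum.inr (Sum.inr (Sum.inr _)) => 3

/-- Vertex weights `(1, y, 1, w)` on the double star: `1` on the hubs, `y` and `w` on the leaves. -/
def leafWeights {p q R : Type*} [One R] (y : p → R) (w : q → R) : Fin 1 ⊕ p ⊕ Fin 1 ⊕ q → R
  | Sum.inl _ => 1
  | Sum.inr (Sum.inl i) => y i
  | Sum.inr (Sum.inr (Sum.inl _)) => 1
  | Sum.inr (Sum.inr (Sum.inr i)) => w i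

lemma fiberNormSq_mergeLeaves_leafWeights {p q R : Type*} [Fintype p] [Fintype q] [Semiring R]
    [StarRing R] (y : p → R) (w : q → R) :
    fiberNormSq mergeLeaves (leafWeights y w) = ![1, star y ⬝ᵥ y, 1, star w ⬝ᵥ w] := by
  ext j
  rw [fiberNormSq, Finset.sum_filter]
  fin_cases j <;> simp [mergeLeaves, leafWeights, dotProduct]

lemma fiberNormSq_mergeLeaves_leafWeights_ne_zero {p q R : Type*} [Fintype p] [Fintype q]
    [Semiring R] [StarRing R] [Nontrivial R] {y : p → R} {w : q → R}
    (hy : star y ⬝ᵥ y ≠ 0) (hw : star w ⬝ᵥ w ≠ 0) (j : Fin 4) :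
    fiberNormSq mergeLeaves (leafWeights y w) j ≠ 0 := by
  rw [fiberNormSq_mergeLeaves_leafWeights]
  fin_cases j <;> simp [hy, hw]

variable {F : Type*} [Field F] [StarRing F] {m n : ℕ}

lemma doubleStar_eq_blowup (a b : F) (x y : Fin m → F) (z w : Fin n → F) :
    doubleStar a b x y z w =
      blowup mergeLeaves (leafWeights y w) * weightedPath a b *
        (blowup mergeLeaves (leafWeights (star x) (star z)))ᴴ := by
  ext i j
  rw [blowup_mul_mul_conjTranspose_apply]
  rcases i with i | i | i | i <;> rcases j with j | j | j | j <;>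
    simp [doubleStar, mergeLeaves, leafWeights, weightedPath]

lemma doubleStarMP_eq_blowup (a b s u t v : F) (x y : Fin m → F) (z w : Fin n → F) :
    doubleStarMP a b s u t v x y z w =
      blowup mergeLeaves (leafWeights (star x) (star z)) *
        (diagonal ![1, s, 1, t]⁻¹ * weightedPathInv a b * diagonal ![1, u, 1, v]⁻¹) *
          (blowup mergeLeaves (leafWeights y w))ᴴ := by
  ext i j
  rw [diagonal_inv_mul_weightedPathInv_mul_diagonal_inv, blowup_mul_mul_conjTranspose_apply]
  rcases i with i | i | i | i <;> rcases j with j | j | j | j <;>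
    simp only [doubleStarMP, of_apply] <;>
    simp [mergeLeaves, leafWeights, -mul_eq_mul_right_iff] <;>
    ring

theorem doubleStar_moorePenrose_eq_general (a b : F) (x y : Fin m → F) (z w : Fin n → F)
    (hx : x ⬝ᵥ star x ≠ 0) (hy : y ⬝ᵥ star y ≠ 0)
    (hz : z ⬝ᵥ star z ≠ 0) (hw : w ⬝ᵥ star w ≠ 0) :
    IsMoorePenroseInverse (doubleStar a b x y z w)
      (doubleStarMP a b (x ⬝ᵥ star x) (y ⬝ᵥ star y) (z ⬝ᵥ star z) (w ⬝ᵥ star w) x y z w) := by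
  rw [dotProduct_comm y] at hy ⊢
  rw [dotProduct_comm w] at hw ⊢
  have hyw := fiberNormSq_mergeLeaves_leafWeights_ne_zero hy hw
  have hxz := fiberNormSq_mergeLeaves_leafWeights_ne_zero (y := star x) (w := star z)
    (by rwa [star_star]) (by rwa [star_star])
  simpa only [doubleStar_eq_blowup, doubleStarMP_eq_blowup, fiberNormSq_mergeLeaves_leafWeights,
    star_star] using isMoorePenroseInverse_blowup hyw hxz
      (weightedPath_mul_weightedPathInv a b) (weightedPathInv_mul_weightedPath a b)

end DoubleStar

/-- If `s, u, t, v` are all nonzero, then the Moore–Penrose inverse of the double star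
matrix `M` is `N = doubleStarMP a b s u t v x y z w`. -/
theorem doubleStar_moorePenrose_eq
    {F : Type*} [Field F] [StarRing F] {m n : ℕ} (a b : F) (ha : a ≠ 0) (hb : b ≠ 0)
    (x y : Fin m → F) (z w : Fin n → F)
    (hx : ∀ i, x i ≠ 0) (hy : ∀ i, y i ≠ 0) (hz : ∀ i, z i ≠ 0) (hw : ∀ i, w i ≠ 0)
    (s u t v : F)
    (hs : s = ∑ i, x i * star (x i)) (hu : u = ∑ i, y i * star (y i))
    (ht : t = ∑ i, z i * star (z i)) (hv : v = ∑ i, w i * star (w i))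
    (hs0 : s ≠ 0) (hu0 : u ≠ 0) (ht0 : t ≠ 0) (hv0 : v ≠ 0) :
    (doubleStar a b x y z w) * (doubleStarMP a b s u t v x y z w) * (doubleStar a b x y z w)
        = doubleStar a b x y z w ∧
      (doubleStarMP a b s u t v x y z w) * (doubleStar a b x y z w) *
          (doubleStarMP a b s u t v x y z w) = doubleStarMP a b s u t v x y z w ∧
      ((doubleStar a b x y z w) * (doubleStarMP a b s u t v x y z w))ᴴ
        = (doubleStar a b x y z w) * (doubleStarMP a b s u t v x y z w) ∧
      ((doubleStarMP a b s u t v x y z w) * (doubleStar a b x y z w))ᴴ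
        = (doubleStarMP a b s u t v x y z w) * (doubleStar a b x y z w) := by
  subst hs hu ht hv
  obtain ⟨hM, hN, hMN, hNM⟩ := doubleStar_moorePenrose_eq_general a b x y z w hs0 hu0 ht0 hv0
  exact ⟨hM, hN, hMN, hNM⟩
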